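/- arXiv:2511.14853 — 6 statements merged into one kernel-verified Lean document; each statement's English description precedes it below -/
import Mathlib

section
/- Let K ≥ 1 and a : Fin K → ℝ with a k > 0 for all k, and fix an index j < K−1. Then the integral over the open corner simplex T = {x ∈ ℝ^(K−1) : x i > 0 for all i and Σ_i x i < 1} of (x j) · ∏_{i < K−1} (x i)^(a i − 1) · (1 − Σ_i x i)^(a (K−1) − 1) equals (a j / Σ_{k < K} a k) · (∏_{k < K} Γ(a k)) / Γ(Σ_{k < K} a k). Consequently, the expectation of the j-th coordinate under the Dirichlet distribution with parameter a equals a j / a₀ where a₀ = Σ_k a k; with the posterior parameter a = n⁰·y⁰ + κ of Theorem 1 this yields the posterior mean formula E[θ_k | κ, n⁰] = (n⁰ y⁰_k + κ_k)/(n⁰ + n). -/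
open MeasureTheory

lemma dfm_beta (u v s : ℝ) (hu : 0 < u) (hv : 0 < v) (hs : 0 < s) :
    ∫⁻ x in Set.Ioo 0 s, ENNReal.ofReal (x ^ (u - 1) * (s - x) ^ (v - 1)) =
      ENNReal.ofReal (s ^ (u + v - 1) * (Real.Gamma u * Real.Gamma v / Real.Gamma (u + v))) := by
  have hG : 0 < Real.Gamma u * Real.Gamma v / Real.Gamma (u + v) :=
    ProbabilityTheory.beta_pos hu hv
  have h1 : ∫ x in Set.Ioo 0 s, x ^ (u - 1) * (s - x) ^ (v - 1) =
      s ^ (u + v - 1) * (Real.Gamma u * Real.Gamma v / Real.Gamma (u + v)) := by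
    have h := Complex.betaIntegral_scaled (u : ℂ) (v : ℂ) hs
    rw [Complex.betaIntegral_eq_Gamma_mul_div _ _ (by simpa) (by simpa),
      intervalIntegral.integral_of_le hs.le, integral_Ioc_eq_integral_Ioo] at h
    have h2 : ∫ x in Set.Ioo 0 s, (x : ℂ) ^ ((u : ℂ) - 1) * ((s : ℂ) - x) ^ ((v : ℂ) - 1) =
        ∫ x in Set.Ioo 0 s, ((x ^ (u - 1) * (s - x) ^ (v - 1) : ℝ) : ℂ) := by
      refine setIntegral_congr_fun measurableSet_Ioo fun x hx ↦ ?_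
      have e1 : (0 : ℝ) ≤ x := hx.1.le
      have e2 : (0 : ℝ) ≤ s - x := by linarith [hx.2]
      rw [Complex.ofReal_mul, Complex.ofReal_cpow e1, Complex.ofReal_cpow e2]
      push_cast
      rfl
    rw [h2, integral_complex_ofReal] at h
    have h3 : (s : ℂ) ^ ((u : ℂ) + v - 1) = ((s ^ (u + v - 1) : ℝ) : ℂ) := by
      rw [Complex.ofReal_cpow hs.le]; push_cast; rfl
    rw [h3, ← Complex.ofReal_add, Complex.Gamma_ofReal, Complex.Gamma_ofReal,
      Complex.Gamma_ofReal] at h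
    exact_mod_cast h
  have hint : IntegrableOn (fun x : ℝ ↦ x ^ (u - 1) * (s - x) ^ (v - 1)) (Set.Ioo 0 s) := by
    by_contra hc
    rw [integral_undef hc] at h1
    have := mul_pos (Real.rpow_pos_of_pos hs (u + v - 1)) hG
    linarith
  rw [← h1, ofReal_integral_eq_lintegral_ofReal hint]
  refine ae_restrict_of_forall_mem measurableSet_Ioo (fun x hx ↦ ?_)
  exact mul_nonneg (Real.rpow_nonneg hx.1.le _) (Real.rpow_nonneg (by linarith [hx.2]) _)

/-- The corner simplex of size `s`. -/
def dfmT (n : ℕ) (s : ℝ) : Set (Fin n → ℝ) := {x | (∀ i, 0 < x i) ∧ ∑ i, x i < s}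

lemma dfmT_meas (n : ℕ) (s : ℝ) : MeasurableSet (dfmT n s) := by
  have h : dfmT n s = (⋂ i, {x : Fin n → ℝ | 0 < x i}) ∩ {x : Fin n → ℝ | ∑ i, x i < s} := by
    ext x; simp [dfmT]
  rw [h]
  refine MeasurableSet.inter (MeasurableSet.iInter fun i ↦ ?_) ?_
  · exact measurableSet_lt measurable_const (measurable_pi_apply i)
  · exact measurableSet_lt (f := fun x : Fin n → ℝ ↦ ∑ i, x i) (by fun_prop) measurable_const

lemma dfm_norm (n : ℕ) : ∀ (a : Fin n → ℝ) (b s : ℝ), (∀ i, 0 < a i) → 0 < b → 0 < s →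
    ∫⁻ x in dfmT n s, ENNReal.ofReal ((∏ i, x i ^ (a i - 1)) * (s - ∑ i, x i) ^ (b - 1)) =
      ENNReal.ofReal (s ^ (∑ i, a i + b - 1) *
        ((∏ i, Real.Gamma (a i)) * Real.Gamma b / Real.Gamma (∑ i, a i + b))) := by
  induction n with
  | zero =>
    intro a b s _ hb hs
    have h0 : dfmT 0 s = Set.univ := by
      ext x; simp [dfmT, hs]
    rw [h0, Measure.restrict_univ, volume_pi, Measure.pi_of_empty, lintegral_dirac]
    simp [div_self (Real.Gamma_pos_of_pos hb).ne']
  | succ n ih =>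
    intro a b s ha hb hs
    set A : ℝ := ∑ i : Fin n, a i.succ with hA
    have hA0 : 0 ≤ A := Finset.sum_nonneg fun i _ ↦ (ha _).le
    set C : ℝ := (∏ i : Fin n, Real.Gamma (a i.succ)) * Real.Gamma b / Real.Gamma (A + b) with hC
    have hC0 : 0 ≤ C := by
      have h1 : 0 ≤ ∏ i : Fin n, Real.Gamma (a i.succ) :=
        Finset.prod_nonneg fun i _ ↦ (Real.Gamma_pos_of_pos (ha _)).le
      have h2 := Real.Gamma_pos_of_pos hb
      have h3 := Real.Gamma_pos_of_pos (show 0 < A + b by linarith)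
      positivity
    rw [← lintegral_indicator (dfmT_meas _ _)]
    rw [← ((volume_preserving_piFinSuccAbove (fun _ : Fin (n + 1) => ℝ) 0).symm _).lintegral_comp_emb
      (MeasurableEquiv.measurableEmbedding _)]
    rw [Measure.volume_eq_prod, lintegral_prod]
    swap
    · refine Measurable.aemeasurable ?_
      refine Measurable.comp (g := (dfmT (n+1) s).indicator _) ?_ (MeasurableEquiv.measurable _)
      exact Measurable.indicator (by fun_prop) (dfmT_meas _ _)
    have key : ∀ t : ℝ, (∫⁻ y : Fin n → ℝ, (dfmT (n + 1) s).indicator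
        (fun x ↦ ENNReal.ofReal ((∏ i, x i ^ (a i - 1)) * (s - ∑ i, x i) ^ (b - 1)))
        ((MeasurableEquiv.piFinSuccAbove (fun _ : Fin (n + 1) => ℝ) 0).symm (t, y))) =
        (Set.Ioo 0 s).indicator (fun t ↦ ENNReal.ofReal C *
          ENNReal.ofReal (t ^ (a 0 - 1) * (s - t) ^ (A + b - 1))) t := by
      intro t
      have hsymm : ∀ y : Fin n → ℝ,
          (MeasurableEquiv.piFinSuccAbove (fun _ : Fin (n + 1) => ℝ) 0).symm (t, y) =
            Fin.cons t y := by
        intro y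
        simp [MeasurableEquiv.piFinSuccAbove, Fin.insertNthEquiv]
      simp_rw [hsymm]
      have hmem : ∀ y : Fin n → ℝ, (Fin.cons t y : Fin (n + 1) → ℝ) ∈ dfmT (n + 1) s ↔
          0 < t ∧ y ∈ dfmT n (s - t) := by
        intro y
        simp [dfmT, Fin.forall_fin_succ, Fin.sum_univ_succ, and_assoc, lt_sub_iff_add_lt']
      by_cases ht : t ∈ Set.Ioo 0 s
      · rw [Set.indicator_of_mem ht]
        have e : ∀ y : Fin n → ℝ, (dfmT (n + 1) s).indicator
            (fun x ↦ ENNReal.ofReal ((∏ i, x i ^ (a i - 1)) * (s - ∑ i, x i) ^ (b - 1)))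
            (Fin.cons t y) = ENNReal.ofReal (t ^ (a 0 - 1)) * (dfmT n (s - t)).indicator
            (fun y ↦ ENNReal.ofReal ((∏ i, y i ^ (a i.succ - 1)) *
              (s - t - ∑ i, y i) ^ (b - 1))) y := by
          intro y
          by_cases hy : y ∈ dfmT n (s - t)
          · rw [Set.indicator_of_mem ((hmem y).2 ⟨ht.1, hy⟩), Set.indicator_of_mem hy,
              ← ENNReal.ofReal_mul (Real.rpow_nonneg ht.1.le _)]
            congr 1
            simp only [Fin.prod_univ_succ, Fin.sum_univ_succ, Fin.cons_zero, Fin.cons_succ]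
            rw [sub_sub, mul_assoc]
          · rw [Set.indicator_of_notMem (fun h ↦ hy ((hmem y).1 h).2),
              Set.indicator_of_notMem hy, mul_zero]
        simp_rw [e]
        rw [lintegral_const_mul' _ _ ENNReal.ofReal_ne_top, lintegral_indicator (dfmT_meas _ _),
          ih _ b (s - t) (fun i ↦ ha _) hb (by linarith [ht.2]),
          ← ENNReal.ofReal_mul (Real.rpow_nonneg ht.1.le _), ← ENNReal.ofReal_mul hC0]
        congr 1
        rw [← hA, ← hC]
        ring
      · rw [Set.indicator_of_notMem ht]
        refine (lintegral_congr fun y ↦ ?_).trans lintegral_zero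
        refine Set.indicator_of_notMem (fun h ↦ ht ?_) _
        obtain ⟨h1, h2, h3⟩ := (hmem y).1 h
        have := Finset.sum_nonneg (s := Finset.univ) fun i _ ↦ (h2 i).le
        exact ⟨h1, by linarith⟩
    rw [lintegral_congr key, lintegral_indicator measurableSet_Ioo,
      lintegral_const_mul' _ _ ENNReal.ofReal_ne_top,
      dfm_beta _ _ _ (ha 0) (by linarith) hs, ← ENNReal.ofReal_mul hC0]
    congr 1
    rw [Fin.prod_univ_succ, Fin.sum_univ_succ, ← hA, hC, ← add_assoc]
    have h3 := (Real.Gamma_pos_of_pos (show 0 < A + b by linarith)).ne'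
    field_simp

lemma dfm_main (n : ℕ) (a : Fin (n + 1) → ℝ) (ha : ∀ k, 0 < a k) (j : Fin n) :
    (∫ x : Fin n → ℝ in dfmT n 1,
        x j * ((∏ i : Fin n, x i ^ (a i.castSucc - 1)) *
          (1 - ∑ i, x i) ^ (a (Fin.last n) - 1))) =
      (a j.castSucc / ∑ k, a k) *
        ((∏ k, Real.Gamma (a k)) / Real.Gamma (∑ k, a k)) := by
  set c : Fin n → ℝ := fun i ↦ a i.castSucc + if i = j then 1 else 0 with hc
  have hc0 : ∀ i, 0 < c i := by
    intro i
    have := ha i.castSucc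
    simp only [hc]; split_ifs <;> linarith
  have hS : 0 < ∑ k, a k := Finset.sum_pos (fun k _ ↦ ha k) ⟨0, Finset.mem_univ _⟩
  have h1 : (∫ x : Fin n → ℝ in dfmT n 1,
        x j * ((∏ i : Fin n, x i ^ (a i.castSucc - 1)) *
          (1 - ∑ i, x i) ^ (a (Fin.last n) - 1))) =
      ∫ x : Fin n → ℝ in dfmT n 1,
        ((∏ i : Fin n, x i ^ (c i - 1)) * (1 - ∑ i, x i) ^ (a (Fin.last n) - 1)) := by
    refine setIntegral_congr_fun (dfmT_meas _ _) fun x hx ↦ ?_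
    have : ∏ i : Fin n, x i ^ (c i - 1) = (∏ i : Fin n, x i ^ (a i.castSucc - 1)) * x j := by
      have e : x j = ∏ i : Fin n, if i = j then x i else 1 := by simp
      conv_rhs => rw [e, ← Finset.prod_mul_distrib]
      refine Finset.prod_congr rfl fun i _ ↦ ?_
      simp only [hc]
      split_ifs
      · rw [← Real.rpow_add_one (hx.1 i).ne']; congr 1; ring
      · simp
    simp only [this]
    ring
  have hsum : ∑ i, c i + a (Fin.last n) = ∑ k, a k + 1 := by
    rw [Fin.sum_univ_castSucc]
    simp [hc, Finset.sum_add_distrib]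
    ring
  have hprod : (∏ i, Real.Gamma (c i)) * Real.Gamma (a (Fin.last n)) =
      a j.castSucc * ∏ k, Real.Gamma (a k) := by
    rw [Fin.prod_univ_castSucc, ← mul_assoc]
    congr 1
    have e : a j.castSucc = ∏ i : Fin n, if i = j then a i.castSucc else 1 := by simp
    rw [e, ← Finset.prod_mul_distrib]
    refine Finset.prod_congr rfl fun i _ ↦ ?_
    simp only [hc]
    split_ifs
    · rw [Real.Gamma_add_one (ha _).ne']
    · simp
  rw [h1, integral_eq_lintegral_of_nonneg_ae, dfm_norm n c _ 1 hc0 (ha _) one_pos, hsum, hprod,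
    Real.Gamma_add_one hS.ne', ENNReal.toReal_ofReal, Real.one_rpow, one_mul]
  · have := (Real.Gamma_pos_of_pos hS).ne'
    field_simp
  · have := Real.Gamma_pos_of_pos hS
    have h2 : 0 ≤ ∏ k, Real.Gamma (a k) :=
      Finset.prod_nonneg fun i _ ↦ (Real.Gamma_pos_of_pos (ha _)).le
    have := ha j.castSucc
    rw [Real.one_rpow]
    positivity
  · refine ae_restrict_of_forall_mem (dfmT_meas _ _) (fun x hx ↦ ?_)
    exact mul_nonneg (Finset.prod_nonneg fun i _ ↦ Real.rpow_nonneg (hx.1 i).le _)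
      (Real.rpow_nonneg (by linarith [hx.2]) _)
  · exact Measurable.aestronglyMeasurable (by fun_prop)

/-- First-moment integral of the Dirichlet kernel: integrating the `j`-th
coordinate against the Dirichlet kernel over the open corner simplex gives
`(a j / ∑ a) · (∏ Γ(a k)) / Γ(∑ a k)`; consequently the Dirichlet expectation
of the `j`-th coordinate is `a j / a₀`. -/
theorem dirichlet_first_moment (K : ℕ) (hK : 1 ≤ K) (a : Fin K → ℝ)
    (ha : ∀ k, 0 < a k) (j : Fin (K - 1)) :
    (∫ x : Fin (K - 1) → ℝ in
        {x : Fin (K - 1) → ℝ | (∀ i, 0 < x i) ∧ ∑ i, x i < 1},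
        x j * ((∏ i : Fin (K - 1), x i ^ (a (Fin.castLE (by omega) i) - 1)) *
          (1 - ∑ i, x i) ^ (a ⟨K - 1, by omega⟩ - 1))) =
      (a (Fin.castLE (by omega) j) / ∑ k, a k) *
        ((∏ k, Real.Gamma (a k)) / Real.Gamma (∑ k, a k)) ∧
    (Real.Gamma (∑ k, a k) / ∏ k, Real.Gamma (a k)) *
      (∫ x : Fin (K - 1) → ℝ in
        {x : Fin (K - 1) → ℝ | (∀ i, 0 < x i) ∧ ∑ i, x i < 1},
        x j * ((∏ i : Fin (K - 1), x i ^ (a (Fin.castLE (by omega) i) - 1)) *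
          (1 - ∑ i, x i) ^ (a ⟨K - 1, by omega⟩ - 1))) =
      a (Fin.castLE (by omega) j) / ∑ k, a k := by
  obtain ⟨n, rfl⟩ : ∃ n, K = n + 1 := ⟨K - 1, by omega⟩
  have h := dfm_main n a ha j
  refine ⟨h, ?_⟩
  refine (congrArg _ h).trans ?_
  have hS : 0 < ∑ k, a k := Finset.sum_pos (fun k _ ↦ ha k) ⟨0, Finset.mem_univ _⟩
  have h1 := (Real.Gamma_pos_of_pos hS).ne'
  have h2 : ∏ k, Real.Gamma (a k) ≠ 0 :=
    Finset.prod_ne_zero_iff.2 fun i _ ↦ (Real.Gamma_pos_of_pos (ha _)).ne'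
  have h3 : a (Fin.castLE (by omega) j) = a j.castSucc := rfl
  rw [h3]
  field_simp
end

section
/- Let K ≥ 2, let a : Fin K → ℝ satisfy a k > 0 for all k, set a₀ = Σ_{k < K} a k, fix an index j < K, and fix t ∈ (0,1). Let b : Fin (K−1) → ℝ enumerate the values a k for k ≠ j. Then the integral over the set {x ∈ ℝ^(K−2) : x i > 0 for all i and Σ_i x i < 1 − t} of ∏_{i < K−2} (x i)^(b i − 1) · (1 − t − Σ_i x i)^(b (K−2) − 1) equals (1−t)^(a₀ − a j − 1) · (∏_{k ≠ j} Γ(a k)) / Γ(a₀ − a j). Consequently, the marginal density at t of the j-th coordinate of a Dirichlet distribution with parameter a is Γ(a₀)/(Γ(a j)·Γ(a₀ − a j)) · t^(a j − 1) · (1−t)^(a₀ − a j − 1), i.e. each component θ_j marginally follows a Beta(a_j, a₀ − a_j) distribution, as asserted in Theorem 1. -/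
open MeasureTheory

lemma beta_lint {α β s : ℝ} (hα : 0 < α) (hβ : 0 < β) (hs : 0 < s) :
    ∫⁻ y in Set.Ioo 0 s, ENNReal.ofReal (y ^ (α - 1) * (s - y) ^ (β - 1)) =
      ENNReal.ofReal (s ^ (α + β - 1) * ProbabilityTheory.beta α β) := by
  have h1 := ProbabilityTheory.lintegral_betaPDF_eq_one hα hβ
  rw [ProbabilityTheory.lintegral_betaPDF] at h1
  have hB := ProbabilityTheory.beta_pos hα hβ
  have himg : Set.Ioo 0 s = (fun u : ℝ => s * u) '' Set.Ioo 0 1 := by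
    rw [Set.image_mul_left_Ioo hs]; simp
  rw [himg, lintegral_image_eq_lintegral_abs_deriv_mul (f' := fun _ => s) measurableSet_Ioo
    (fun x _ => by simpa using ((hasDerivAt_id x).const_mul s).hasDerivWithinAt)
    (fun x _ y _ h => mul_left_cancel₀ hs.ne' h)]
  have hc : ∀ u ∈ Set.Ioo (0:ℝ) 1,
      ENNReal.ofReal |s| * ENNReal.ofReal ((s * u) ^ (α - 1) * (s - s * u) ^ (β - 1)) =
      ENNReal.ofReal (s ^ (α + β - 1) * ProbabilityTheory.beta α β) *
        ENNReal.ofReal (1 / ProbabilityTheory.beta α β * u ^ (α - 1) * (1 - u) ^ (β - 1)) := by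
    intro u hu
    rw [← ENNReal.ofReal_mul (abs_nonneg _), ← ENNReal.ofReal_mul (by positivity), abs_of_pos hs]
    congr 1
    have e1 : s - s * u = s * (1 - u) := by ring
    have e2 : s ^ (α + β - 1) = s * s ^ (α - 1) * s ^ (β - 1) := by
      rw [show α + β - 1 = 1 + (α - 1) + (β - 1) by ring, Real.rpow_add hs, Real.rpow_add hs,
        Real.rpow_one]
    rw [e1, Real.mul_rpow hs.le hu.1.le, Real.mul_rpow hs.le (by linarith [hu.2]), e2]
    field_simp
  rw [setLIntegral_congr_fun measurableSet_Ioo hc, lintegral_const_mul' _ _ ENNReal.ofReal_ne_top,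
    h1, mul_one]

lemma simplex_meas (n : ℕ) (s : ℝ) :
    MeasurableSet {x : Fin n → ℝ | (∀ i, 0 < x i) ∧ ∑ i, x i < s} := by
  apply MeasurableSet.inter
  · change MeasurableSet {x : Fin n → ℝ | ∀ i, 0 < x i}
    rw [Set.ofPred_forall]
    exact MeasurableSet.iInter fun i => measurableSet_lt measurable_const (measurable_pi_apply i)
  · exact measurableSet_lt (f := fun x : Fin n → ℝ => ∑ i, x i) (by fun_prop) measurable_const

lemma dirichlet_lint (n : ℕ) : ∀ (b : Fin n → ℝ) (c s : ℝ), (∀ i, 0 < b i) → 0 < c → 0 < s →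
    ∫⁻ x in {x : Fin n → ℝ | (∀ i, 0 < x i) ∧ ∑ i, x i < s},
      ENNReal.ofReal ((∏ i, x i ^ (b i - 1)) * (s - ∑ i, x i) ^ (c - 1)) =
    ENNReal.ofReal (s ^ (∑ i, b i + c - 1) *
      ((∏ i, Real.Gamma (b i)) * Real.Gamma c) / Real.Gamma (∑ i, b i + c)) := by
  induction n with
  | zero =>
    intro b c s hb hc hs
    have : {x : Fin 0 → ℝ | (∀ i, 0 < x i) ∧ ∑ i, x i < s} = Set.univ := by
      ext x; simp [hs]
    have hg := (Real.Gamma_pos_of_pos hc).ne'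
    rw [this, Measure.restrict_univ, lintegral_unique]
    simp [hg, volume_pi]
  | succ n ih =>
    intro b c s hb hc hs
    have hB : 0 < ∑ i, b (Fin.succ i) + c :=
      add_pos_of_nonneg_of_pos (Finset.sum_nonneg fun i _ => (hb _).le) hc
    have hGB := Real.Gamma_pos_of_pos hB
    have hGc := Real.Gamma_pos_of_pos hc
    have hGP : 0 < ∏ i : Fin n, Real.Gamma (b (Fin.succ i)) :=
      Finset.prod_pos fun i _ => Real.Gamma_pos_of_pos (hb _)
    have hmp := (volume_preserving_piFinSuccAbove (fun _ : Fin (n + 1) => ℝ) 0).symm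
    rw [← lintegral_indicator (simplex_meas _ _), ← hmp.lintegral_comp_emb
      (MeasurableEquiv.measurableEmbedding _), Measure.volume_eq_prod, lintegral_prod]
    swap
    · apply Measurable.aemeasurable
      refine Measurable.comp (g := Set.indicator
        {x : Fin (n+1) → ℝ | (∀ i, 0 < x i) ∧ ∑ i, x i < s}
        (fun x => ENNReal.ofReal ((∏ i, x i ^ (b i - 1)) * (s - ∑ i, x i) ^ (c - 1)))) ?_
        (MeasurableEquiv.piFinSuccAbove (fun _ : Fin (n + 1) => ℝ) 0).symm.measurable
      refine Measurable.indicator ?_ (simplex_meas _ _)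
      fun_prop
    have hin : ∀ y : ℝ, (∫⁻ x : Fin n → ℝ,
        Set.indicator {x : Fin (n+1) → ℝ | (∀ i, 0 < x i) ∧ ∑ i, x i < s}
        (fun x => ENNReal.ofReal ((∏ i, x i ^ (b i - 1)) * (s - ∑ i, x i) ^ (c - 1)))
          ((MeasurableEquiv.piFinSuccAbove (fun _ : Fin (n + 1) => ℝ) 0).symm (y, x))) =
        Set.indicator (Set.Ioo 0 s) (fun y =>
          ENNReal.ofReal ((∏ i : Fin n, Real.Gamma (b (Fin.succ i))) * Real.Gamma c /
            Real.Gamma (∑ i : Fin n, b (Fin.succ i) + c)) *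
          ENNReal.ofReal (y ^ (b 0 - 1) * (s - y) ^ (∑ i : Fin n, b (Fin.succ i) + c - 1))) y := by
      intro y
      have hsymm : ∀ x : Fin n → ℝ,
          (MeasurableEquiv.piFinSuccAbove (fun _ : Fin (n + 1) => ℝ) 0).symm (y, x) =
            (Fin.cons y x : Fin (n+1) → ℝ) := by
        intro x
        simp [MeasurableEquiv.piFinSuccAbove]
        rfl
      simp only [hsymm]
      by_cases hy : y ∈ Set.Ioo 0 s
      · rw [Set.indicator_of_mem hy]
        have h2 := ih (fun i => b (Fin.succ i)) c (s - y) (fun i => hb _) hc (by linarith [hy.2])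
        have hyp : 0 ≤ y ^ (b 0 - 1) := Real.rpow_nonneg hy.1.le _
        have hsy : 0 ≤ (s - y) ^ (∑ i : Fin n, b (Fin.succ i) + c - 1) :=
          Real.rpow_nonneg (by linarith [hy.2]) _
        have h3 : ∀ x : Fin n → ℝ,
          Set.indicator {x : Fin (n+1) → ℝ | (∀ i, 0 < x i) ∧ ∑ i, x i < s}
          (fun x => ENNReal.ofReal ((∏ i, x i ^ (b i - 1)) * (s - ∑ i, x i) ^ (c - 1)))
            (Fin.cons y x : Fin (n+1) → ℝ) =
          ENNReal.ofReal (y ^ (b 0 - 1)) *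
          Set.indicator {x : Fin n → ℝ | (∀ i, 0 < x i) ∧ ∑ i, x i < s - y}
          (fun x => ENNReal.ofReal ((∏ i, x i ^ (b (Fin.succ i) - 1)) *
            (s - y - ∑ i, x i) ^ (c - 1))) x := by
          intro x
          have hiff : (Fin.cons y x : Fin (n+1) → ℝ) ∈
              {x : Fin (n+1) → ℝ | (∀ i, 0 < x i) ∧ ∑ i, x i < s} ↔
              x ∈ {x : Fin n → ℝ | (∀ i, 0 < x i) ∧ ∑ i, x i < s - y} := by
            simp only [Set.mem_ofPred_eq, Fin.forall_fin_succ, Fin.sum_univ_succ, Fin.cons_zero,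
              Fin.cons_succ, hy.1, true_and, lt_sub_iff_add_lt']
          by_cases hx : x ∈ {x : Fin n → ℝ | (∀ i, 0 < x i) ∧ ∑ i, x i < s - y}
          · rw [Set.indicator_of_mem hx, Set.indicator_of_mem (hiff.2 hx),
              ← ENNReal.ofReal_mul hyp]
            simp only [Fin.prod_univ_succ, Fin.sum_univ_succ, Fin.cons_zero, Fin.cons_succ]
            rw [mul_assoc, sub_sub]
          · rw [Set.indicator_of_notMem hx, Set.indicator_of_notMem (fun h => hx (hiff.1 h)),
              mul_zero]
        simp only [h3]
        rw [lintegral_const_mul' _ _ ENNReal.ofReal_ne_top, lintegral_indicator (simplex_meas _ _),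
          h2, ← ENNReal.ofReal_mul hyp, ← ENNReal.ofReal_mul (by positivity)]
        congr 1
        ring
      · rw [Set.indicator_of_notMem hy]
        have h3 : ∀ x : Fin n → ℝ,
          Set.indicator {x : Fin (n+1) → ℝ | (∀ i, 0 < x i) ∧ ∑ i, x i < s}
          (fun x => ENNReal.ofReal ((∏ i, x i ^ (b i - 1)) * (s - ∑ i, x i) ^ (c - 1)))
            (Fin.cons y x : Fin (n+1) → ℝ) = 0 := by
          intro x
          apply Set.indicator_of_notMem
          rintro ⟨h, h'⟩
          simp only [Fin.forall_fin_succ, Fin.sum_univ_succ, Fin.cons_zero, Fin.cons_succ] at h h'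
          have := Finset.sum_nonneg (s := Finset.univ) fun i _ => (h.2 i).le
          exact hy ⟨h.1, by linarith⟩
        simp only [h3, lintegral_zero]
    simp only [hin]
    rw [lintegral_indicator measurableSet_Ioo, lintegral_const_mul' _ _ ENNReal.ofReal_ne_top,
      beta_lint (hb 0) hB hs, ← ENNReal.ofReal_mul (by positivity)]
    congr 1
    rw [Fin.prod_univ_succ, Fin.sum_univ_succ, ProbabilityTheory.beta, ← add_assoc]
    field_simp

lemma dirichlet_int (n : ℕ) (b : Fin n → ℝ) (c s : ℝ) (hb : ∀ i, 0 < b i) (hc : 0 < c)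
    (hs : 0 < s) :
    ∫ x in {x : Fin n → ℝ | (∀ i, 0 < x i) ∧ ∑ i, x i < s},
      ((∏ i, x i ^ (b i - 1)) * (s - ∑ i, x i) ^ (c - 1)) =
    s ^ (∑ i, b i + c - 1) *
      ((∏ i, Real.Gamma (b i)) * Real.Gamma c) / Real.Gamma (∑ i, b i + c) := by
  have hB : 0 < ∑ i, b i + c :=
    add_pos_of_nonneg_of_pos (Finset.sum_nonneg fun i _ => (hb _).le) hc
  have hGB := Real.Gamma_pos_of_pos hB
  have hGc := Real.Gamma_pos_of_pos hc
  have hGP : 0 < ∏ i : Fin n, Real.Gamma (b i) :=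
    Finset.prod_pos fun i _ => Real.Gamma_pos_of_pos (hb _)
  rw [integral_eq_lintegral_of_nonneg_ae, dirichlet_lint n b c s hb hc hs,
    ENNReal.toReal_ofReal (by positivity)]
  · refine ae_restrict_of_forall_mem (simplex_meas _ _) fun x hx => ?_
    exact mul_nonneg (Finset.prod_nonneg fun i _ => Real.rpow_nonneg (hx.1 i).le _)
      (Real.rpow_nonneg (by linarith [hx.2]) _)
  · exact Measurable.aestronglyMeasurable (by fun_prop)

/-- Marginalizing a Dirichlet distribution: integrating the Dirichlet kernel over
the remaining coordinates (which sum to `1 - t`) yields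
`(1-t)^(a₀ - a j - 1) · (∏_{k ≠ j} Γ(a k)) / Γ(a₀ - a j)`; consequently the
`j`-th coordinate of a Dirichlet(a) vector marginally has the
Beta(a j, a₀ - a j) density at `t`. -/
theorem dirichlet_marginal_beta (K : ℕ) (hK : 2 ≤ K) (a : Fin K → ℝ)
    (ha : ∀ k, 0 < a k) (j : Fin K) (t : ℝ) (ht : t ∈ Set.Ioo (0 : ℝ) 1)
    (b : Fin (K - 1) → ℝ) (e : Fin (K - 1) ≃ {k : Fin K // k ≠ j})
    (hb : ∀ i, b i = a (e i)) :
    (∫ x : Fin (K - 2) → ℝ in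
        {x : Fin (K - 2) → ℝ | (∀ i, 0 < x i) ∧ ∑ i, x i < 1 - t},
        (∏ i : Fin (K - 2), x i ^ (b (Fin.castLE (by omega) i) - 1)) *
          (1 - t - ∑ i, x i) ^ (b ⟨K - 2, by omega⟩ - 1)) =
      (1 - t) ^ ((∑ k, a k) - a j - 1) *
        (∏ k ∈ Finset.univ.erase j, Real.Gamma (a k)) /
          Real.Gamma ((∑ k, a k) - a j) ∧
    (Real.Gamma (∑ k, a k) / ∏ k, Real.Gamma (a k)) * t ^ (a j - 1) *
      (∫ x : Fin (K - 2) → ℝ in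
        {x : Fin (K - 2) → ℝ | (∀ i, 0 < x i) ∧ ∑ i, x i < 1 - t},
        (∏ i : Fin (K - 2), x i ^ (b (Fin.castLE (by omega) i) - 1)) *
          (1 - t - ∑ i, x i) ^ (b ⟨K - 2, by omega⟩ - 1)) =
      Real.Gamma (∑ k, a k) /
          (Real.Gamma (a j) * Real.Gamma ((∑ k, a k) - a j)) *
        (t ^ (a j - 1) * (1 - t) ^ ((∑ k, a k) - a j - 1)) := by
  obtain ⟨m, rfl⟩ : ∃ m, K = m + 2 := ⟨K - 2, by omega⟩
  have hbp : ∀ i, 0 < b i := fun i => by rw [hb]; exact ha _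
  have hs : 0 < 1 - t := by linarith [ht.2]
  have key := dirichlet_int m (fun i => b (Fin.castSucc i)) (b (Fin.last m)) (1 - t)
    (fun i => hbp _) (hbp _) hs
  have hsum : ∑ i : Fin m, b (Fin.castSucc i) + b (Fin.last m) = (∑ k, a k) - a j := by
    have h1 : ∑ i : Fin (m + 1), b i = ∑ k ∈ Finset.univ.erase j, a k := by
      rw [Finset.sum_subtype (p := fun k => k ≠ j) (Finset.univ.erase j) (by simp) a,
        ← Equiv.sum_comp e]
      exact Finset.sum_congr rfl fun i _ => hb i
    rw [← Fin.sum_univ_castSucc (fun i : Fin (m + 1) => b i), h1,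
      ← Finset.add_sum_erase _ a (Finset.mem_univ j)]
    ring
  have hprod : (∏ i : Fin m, Real.Gamma (b (Fin.castSucc i))) * Real.Gamma (b (Fin.last m)) =
      ∏ k ∈ Finset.univ.erase j, Real.Gamma (a k) := by
    rw [← Fin.prod_univ_castSucc (fun i : Fin (m + 1) => Real.Gamma (b i)),
      Finset.prod_subtype (p := fun k => k ≠ j) (Finset.univ.erase j) (by simp)
        (fun k => Real.Gamma (a k)), ← Equiv.prod_comp e]
    exact Finset.prod_congr rfl fun i _ => by rw [hb i]
  rw [hsum, hprod] at key
  refine ⟨key, ?_⟩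
  refine (congrArg _ key).trans ?_
  have hP : 0 < ∏ k ∈ Finset.univ.erase j, Real.Gamma (a k) :=
    Finset.prod_pos fun i _ => Real.Gamma_pos_of_pos (ha _)
  have hj := Real.Gamma_pos_of_pos (ha j)
  rw [← Finset.mul_prod_erase _ (fun k => Real.Gamma (a k)) (Finset.mem_univ j)]
  field_simp
end

section
/- Let π, y ∈ Δ_{K−1}, let κ : Fin K → ℕ be counts with Σ_k κ_k = n > 0, and let 0 < n̲ ≤ n̄. Define the posterior mean path θ(n⁰)_k = (n⁰·y_k + κ_k)/(n⁰ + n) for n⁰ ∈ [n̲, n̄]. Then the maximum over n⁰ ∈ [n̲, n̄] of the total variation distance D_TV(π, θ(n⁰)) is attained at an endpoint: max_{n⁰ ∈ [n̲,n̄]} D_TV(π, θ(n⁰)) = max(D_TV(π, θ(n̲)), D_TV(π, θ(n̄))). The same endpoint attainment holds for the Jensen–Shannon divergence: max_{n⁰ ∈ [n̲,n̄]} D_JS(π, θ(n⁰)) = max(D_JS(π, θ(n̲)), D_JS(π, θ(n̄))). Hence the upper bounds of the interval-valued representativeness metrics are obtained by evaluating the discrepancy measures at the boundary values of the prior strength.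 -/
/-- Total variation distance between categorical distributions. -/
noncomputable def TVdist {K : ℕ} (p q : Fin K → ℝ) : ℝ :=
  (1 / 2) * ∑ k, |p k - q k|

/-- Kullback–Leibler divergence between categorical distributions, with the
convention that a summand is `0` whenever `p k = 0`. -/
noncomputable def KLdiv {K : ℕ} (p q : Fin K → ℝ) : ℝ :=
  ∑ k, p k * Real.log (p k / q k)

/-- Jensen–Shannon divergence `D_JS(p,q) = ½ D_KL(p‖m) + ½ D_KL(q‖m)` with
`m = ½(p+q)`. -/
noncomputable def JSdiv {K : ℕ} (p q : Fin K → ℝ) : ℝ :=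
  (1 / 2) * KLdiv p (fun k => (1 / 2) * (p k + q k)) +
    (1 / 2) * KLdiv q (fun k => (1 / 2) * (p k + q k))

lemma js_scalar_convex (p : ℝ) (hp : 0 ≤ p) :
    ConvexOn ℝ (Set.Ici (0 : ℝ)) (fun q : ℝ => p * Real.log p + q * Real.log q
      - 2 * (((1 / 2) * (p + q)) * Real.log ((1 / 2) * (p + q)))) := by
  have hd : ∀ q : ℝ, 0 < q → HasDerivAt (fun q : ℝ => p * Real.log p + q * Real.log q
      - 2 * (((1 / 2) * (p + q)) * Real.log ((1 / 2) * (p + q))))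
      (Real.log q - Real.log ((1 / 2) * (p + q))) q := by
    intro q hq
    have h1 := Real.hasDerivAt_mul_log hq.ne'
    have h2 : HasDerivAt (fun q : ℝ => (1 / 2) * (p + q)) (1 / 2) q := by
      simpa using ((hasDerivAt_id q).const_add p).const_mul (1 / 2 : ℝ)
    have hm : (1 / 2) * (p + q) ≠ 0 := by positivity
    have h3 := (Real.hasDerivAt_mul_log hm).comp q h2
    have h4 := (h1.const_add (p * Real.log p)).sub (h3.const_mul 2)
    refine h4.congr_deriv ?_
    ring
  apply MonotoneOn.convexOn_of_deriv (convex_Ici 0)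
  · apply Continuous.continuousOn
    have hc : Continuous fun q : ℝ => (1 / 2) * (p + q) := by fun_prop
    exact (continuous_const.add Real.continuous_mul_log).sub
      (continuous_const.mul (Real.continuous_mul_log.comp hc))
  · rw [interior_Ici]
    intro q hq
    exact (hd q hq).differentiableAt.differentiableWithinAt
  · rw [interior_Ici]
    intro a ha b hb hab
    rw [Set.mem_Ioi] at ha hb
    rw [(hd a ha).deriv, (hd b hb).deriv, ← Real.log_div (by positivity) (by positivity),
      ← Real.log_div (by positivity) (by positivity)]
    apply Real.log_le_log (by positivity)
    rw [div_le_div_iff₀ (by positivity) (by positivity)]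
    nlinarith

lemma js_scalar_eq (p q : ℝ) (hp : 0 ≤ p) (hq : 0 ≤ q) :
    p * Real.log (p / ((1 / 2) * (p + q))) + q * Real.log (q / ((1 / 2) * (p + q)))
      = p * Real.log p + q * Real.log q
      - 2 * (((1 / 2) * (p + q)) * Real.log ((1 / 2) * (p + q))) := by
  have key : ∀ x m : ℝ, 0 ≤ x → x ≤ 2 * m →
      x * Real.log (x / m) = x * Real.log x - x * Real.log m := by
    intro x m hx hxm
    rcases hx.eq_or_lt with h | h
    · simp [← h]
    · rw [Real.log_div h.ne' (by linarith)]
      ring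
  rw [key p _ hp (by linarith), key q _ hq (by linarith)]
  ring

lemma convexOn_sum_coord {K : ℕ} (f : Fin K → ℝ → ℝ)
    (hf : ∀ k, ConvexOn ℝ (Set.Ici (0 : ℝ)) (f k)) :
    ConvexOn ℝ {q : Fin K → ℝ | ∀ k, 0 ≤ q k} (fun q => (1 / 2) * ∑ k, f k (q k)) := by
  refine ⟨?_, ?_⟩
  · intro u hu v hv a b ha hb _ k
    have h1 := hu k
    have h2 := hv k
    simp only [Pi.add_apply, Pi.smul_apply, smul_eq_mul]
    positivity
  · intro u hu v hv a b ha hb hab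
    have h : ∑ k, f k ((a • u + b • v) k) ≤ ∑ k, (a * f k (u k) + b * f k (v k)) :=
      Finset.sum_le_sum fun k _ => (hf k).2 (hu k) (hv k) ha hb hab
    rw [Finset.sum_add_distrib, ← Finset.mul_sum, ← Finset.mul_sum] at h
    simp only [smul_eq_mul]
    linarith

lemma tv_convex {K : ℕ} (p : Fin K → ℝ) :
    ConvexOn ℝ {q : Fin K → ℝ | ∀ k, 0 ≤ q k} (TVdist p) := by
  refine convexOn_sum_coord (fun k x => |p k - x|) fun k => ⟨convex_Ici 0, ?_⟩
  intro u _ v _ a b ha hb hab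
  simp only [smul_eq_mul]
  have h : p k - (a * u + b * v) = a * (p k - u) + b * (p k - v) := by
    linear_combination (-p k) * hab
  rw [h]
  refine (abs_add_le _ _).trans ?_
  rw [abs_mul, abs_mul, abs_of_nonneg ha, abs_of_nonneg hb]

lemma js_convex {K : ℕ} (p : Fin K → ℝ) (hp : ∀ k, 0 ≤ p k) :
    ConvexOn ℝ {q : Fin K → ℝ | ∀ k, 0 ≤ q k} (JSdiv p) := by
  refine (convexOn_sum_coord _ fun k => js_scalar_convex (p k) (hp k)).congr ?_
  intro q hq
  simp only [JSdiv, KLdiv]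
  rw [← mul_add, ← Finset.sum_add_distrib]
  congr 1
  exact Finset.sum_congr rfl fun k _ => (js_scalar_eq (p k) (q k) (hp k) (hq k)).symm

lemma path_isGreatest {K : ℕ} (F : (Fin K → ℝ) → ℝ)
    (hF : ConvexOn ℝ {q : Fin K → ℝ | ∀ k, 0 ≤ q k} F)
    (y : Fin K → ℝ) (hy0 : ∀ k, 0 ≤ y k) (κ : Fin K → ℕ) (n : ℕ)
    (nlo nhi : ℝ) (hlo : 0 < nlo) (hlohi : nlo ≤ nhi) :
    IsGreatest ((fun n0 : ℝ => F (fun k => (n0 * y k + κ k) / (n0 + n))) '' Set.Icc nlo nhi)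
      (max (F (fun k => (nlo * y k + κ k) / (nlo + n)))
        (F (fun k => (nhi * y k + κ k) / (nhi + n)))) := by
  have hhi : 0 < nhi := by linarith
  have hmem : ∀ t : ℝ, 0 < t →
      (fun k => (t * y k + κ k) / (t + n)) ∈ {q : Fin K → ℝ | ∀ k, 0 ≤ q k} := by
    intro t ht k
    have := hy0 k
    positivity
  constructor
  · rcases max_choice (F (fun k => (nlo * y k + κ k) / (nlo + n)))
        (F (fun k => (nhi * y k + κ k) / (nhi + n))) with h | h
    · rw [h]
      exact ⟨nlo, ⟨le_rfl, hlohi⟩, rfl⟩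
    · rw [h]
      exact ⟨nhi, ⟨hlohi, le_rfl⟩, rfl⟩
  · rintro _ ⟨t, ht, rfl⟩
    have ht0 : 0 < t := lt_of_lt_of_le hlo ht.1
    apply hF.le_max_of_mem_segment (hmem nlo hlo) (hmem nhi hhi)
    rw [← segment_eq_Icc hlohi] at ht
    obtain ⟨a, b, ha, hb, hab, hs⟩ := ht
    simp only [smul_eq_mul] at hs
    have e0 : t + n ≠ 0 := by positivity
    have e1 : nlo + n ≠ 0 := by positivity
    have e2 : nhi + n ≠ 0 := by positivity
    refine ⟨a * (nlo + n) / (t + n), b * (nhi + n) / (t + n), by positivity, by positivity, ?_, ?_⟩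
    · rw [← add_div, div_eq_one_iff_eq e0]
      linear_combination hs + (n : ℝ) * hab
    · funext k
      simp only [Pi.add_apply, Pi.smul_apply, smul_eq_mul]
      field_simp
      linear_combination y k * hs + (κ k : ℝ) * hab

/-- Along the posterior-mean path `θ(n⁰)_k = (n⁰ y_k + κ_k)/(n⁰+n)`, the maxima
over `n⁰ ∈ [n̲, n̄]` of both `D_TV(π, θ(n⁰))` and `D_JS(π, θ(n⁰))` are attained
at the endpoints of the prior-strength interval. -/
theorem discrepancy_max_attained_at_endpoints (K : ℕ) (π y : Fin K → ℝ)
    (hπ0 : ∀ k, 0 ≤ π k) (hπ1 : ∑ k, π k = 1)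
    (hy0 : ∀ k, 0 ≤ y k) (hy1 : ∑ k, y k = 1)
    (κ : Fin K → ℕ) (n : ℕ) (hκn : ∑ k, κ k = n) (hn : 0 < n)
    (nlo nhi : ℝ) (hlo : 0 < nlo) (hlohi : nlo ≤ nhi) :
    IsGreatest
      ((fun n0 : ℝ =>
          TVdist π (fun k => (n0 * y k + κ k) / (n0 + n))) '' Set.Icc nlo nhi)
      (max (TVdist π (fun k => (nlo * y k + κ k) / (nlo + n)))
        (TVdist π (fun k => (nhi * y k + κ k) / (nhi + n)))) ∧
    IsGreatest
      ((fun n0 : ℝ =>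
          JSdiv π (fun k => (n0 * y k + κ k) / (n0 + n))) '' Set.Icc nlo nhi)
      (max (JSdiv π (fun k => (nlo * y k + κ k) / (nlo + n)))
        (JSdiv π (fun k => (nhi * y k + κ k) / (nhi + n)))) := by
  exact ⟨path_isGreatest _ (tv_convex π) y hy0 κ n nlo nhi hlo hlohi,
    path_isGreatest _ (js_convex π hπ0) y hy0 κ n nlo nhi hlo hlohi⟩
end

section
/- Let Y ⊆ Δ_{K−1} be a convex set of prior mean vectors, let 0 < n̲ ≤ n̄, and let κ ∈ ℝ^K be a fixed count vector. Then the set of posterior Dirichlet parameters {n⁰·y + κ : y ∈ Y, n⁰ ∈ [n̲, n̄]} is a convex subset of ℝ^K; that is, the affine conjugate update of a convex credal prior set yields a convex posterior parameter set, as asserted in Theorem 1. -/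
/-- The affine conjugate update of a convex credal prior set yields a convex
posterior parameter set: if `Y ⊆ Δ_{K−1}` is convex and `0 < n̲ ≤ n̄`, then
`{n⁰·y + κ : y ∈ Y, n⁰ ∈ [n̲, n̄]}` is convex in `ℝ^K`. -/
theorem posterior_parameter_set_convex (K : ℕ) (Y : Set (Fin K → ℝ))
    (hYsub : Y ⊆ {θ : Fin K → ℝ | (∀ k, 0 ≤ θ k) ∧ ∑ k, θ k = 1})
    (hYconv : Convex ℝ Y) (nlo nhi : ℝ) (hlo : 0 < nlo) (hlohi : nlo ≤ nhi)
    (κ : Fin K → ℝ) :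
    Convex ℝ {z : Fin K → ℝ |
      ∃ y ∈ Y, ∃ n0 ∈ Set.Icc nlo nhi, z = fun k => n0 * y k + κ k} := by
  rintro _ ⟨y₁, hy₁, n₁, ⟨hl₁, hh₁⟩, rfl⟩ _ ⟨y₂, hy₂, n₂, ⟨hl₂, hh₂⟩, rfl⟩ a b ha hb hab
  have hlow : nlo ≤ a * n₁ + b * n₂ := by
    have h1 := mul_le_mul_of_nonneg_left hl₁ ha
    have h2 := mul_le_mul_of_nonneg_left hl₂ hb
    have h3 : a * nlo + b * nlo = nlo := by rw [← add_mul, hab, one_mul]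
    linarith
  have hupp : a * n₁ + b * n₂ ≤ nhi := by
    have h1 := mul_le_mul_of_nonneg_left hh₁ ha
    have h2 := mul_le_mul_of_nonneg_left hh₂ hb
    have h3 : a * nhi + b * nhi = nhi := by rw [← add_mul, hab, one_mul]
    linarith
  have hn : 0 < a * n₁ + b * n₂ := lt_of_lt_of_le hlo hlow
  have hn₁ : 0 ≤ n₁ := by linarith
  have hn₂ : 0 ≤ n₂ := by linarith
  refine ⟨(a * n₁ / (a * n₁ + b * n₂)) • y₁ + (b * n₂ / (a * n₁ + b * n₂)) • y₂,
    hYconv hy₁ hy₂ (by positivity) (by positivity) ?_,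
    a * n₁ + b * n₂, ⟨hlow, hupp⟩, ?_⟩
  · rw [← add_div, div_self hn.ne']
  · funext k
    have e1 : (a * n₁ + b * n₂) * (a * n₁ / (a * n₁ + b * n₂)) = a * n₁ :=
      mul_div_cancel₀ _ hn.ne'
    have e2 : (a * n₁ + b * n₂) * (b * n₂ / (a * n₁ + b * n₂)) = b * n₂ :=
      mul_div_cancel₀ _ hn.ne'
    simp only [Pi.add_apply, Pi.smul_apply, smul_eq_mul]
    linear_combination κ k * hab - y₁ k * e1 - y₂ k * e2
end

section
/- Let Y ⊆ Δ_{K−1} be a nonempty compact convex set of prior mean vectors, let 0 < n̲ ≤ n̄, let κ : Fin K → ℕ be counts with Σ_k κ_k = n > 0, and let c : Fin K → ℝ be the coefficients of a linear functional. Define E(y, n⁰) = Σ_k c_k · (n⁰·y_k + κ_k)/(n⁰ + n), the posterior expectation of the linear functional θ ↦ Σ_k c_k θ_k under the Dirichlet posterior with parameter n⁰·y + κ. Then the supremum of E over Y × [n̲, n̄] is attained at a point (y*, n*) with y* an extreme point of Y and n* ∈ {n̲, n̄}, and likewise the infimum is attained at an extreme point of Y paired with an endpoint of [n̲, n̄].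 Hence the posterior envelopes of Theorem 1 for linear functionals are attained at the extreme points of Y and the endpoints of the prior-strength interval. -/
theorem exists_extreme_max {K : ℕ} (Y : Set (Fin K → ℝ)) (hYne : Y.Nonempty)
    (hYcomp : IsCompact Y) (c : Fin K → ℝ) :
    ∃ x ∈ Y.extremePoints ℝ, ∀ y ∈ Y, ∑ k, c k * y k ≤ ∑ k, c k * x k := by
  let l : StrongDual ℝ (Fin K → ℝ) := ∑ k, c k • ContinuousLinearMap.proj k
  have hl : ∀ y, l y = ∑ k, c k * y k := by
    intro y
    simp [l, ContinuousLinearMap.sum_apply]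
  have hexp : IsExposed ℝ Y (l.toExposed Y) := ContinuousLinearMap.toExposed.isExposed
  have hcomp : IsCompact (l.toExposed Y) := hexp.isCompact hYcomp
  have hne : (l.toExposed Y).Nonempty := by
    obtain ⟨x, hx, hmax⟩ := hYcomp.exists_isMaxOn hYne l.continuous.continuousOn
    exact ⟨x, hx, fun y hy => hmax hy⟩
  obtain ⟨x, hx⟩ := hcomp.extremePoints_nonempty hne
  refine ⟨x, hexp.isExtreme.extremePoints_subset_extremePoints hx, fun y hy => ?_⟩
  have h := hx.1.2 y hy
  rwa [hl, hl] at h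

theorem sum_posterior_eq {K : ℕ} (κ : Fin K → ℕ) (n : ℕ) (c y : Fin K → ℝ) (t : ℝ) :
    ∑ k, c k * ((t * y k + κ k) / (t + n)) =
      (t * (∑ k, c k * y k) + ∑ k, c k * κ k) / (t + n) := by
  rw [Finset.mul_sum, ← Finset.sum_add_distrib, Finset.sum_div]
  refine Finset.sum_congr rfl fun k _ => ?_
  ring

theorem posterior_max {K : ℕ} (Y : Set (Fin K → ℝ)) (hYne : Y.Nonempty)
    (hYcomp : IsCompact Y) (nlo nhi : ℝ) (hlo : 0 < nlo) (hlohi : nlo ≤ nhi)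
    (κ : Fin K → ℕ) (n : ℕ) (c : Fin K → ℝ) :
    ∃ ystar ∈ Y.extremePoints ℝ, ∃ nstar ∈ ({nlo, nhi} : Set ℝ),
      ∀ y ∈ Y, ∀ n0 ∈ Set.Icc nlo nhi,
        ∑ k, c k * ((n0 * y k + κ k) / (n0 + n)) ≤
          ∑ k, c k * ((nstar * ystar k + κ k) / (nstar + n)) := by
  obtain ⟨x, hx, hmax⟩ := exists_extreme_max Y hYne hYcomp c
  have hn : (0 : ℝ) ≤ n := Nat.cast_nonneg n
  have step : ∀ y ∈ Y, ∀ n0 ∈ Set.Icc nlo nhi,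
      (n0 * (∑ k, c k * y k) + ∑ k, c k * κ k) / (n0 + n) ≤
      (n0 * (∑ k, c k * x k) + ∑ k, c k * κ k) / (n0 + n) := by
    intro y hy n0 h0
    have h0p : 0 < n0 := hlo.trans_le h0.1
    have := hmax y hy
    gcongr
  simp only [sum_posterior_eq]
  obtain ⟨M, hM⟩ : ∃ M, (∑ k, c k * x k) = M := ⟨_, rfl⟩
  rw [hM] at step
  generalize (∑ k, c k * (κ k : ℝ)) = S at step ⊢
  rcases le_total S (n * M) with h | h
  · refine ⟨x, hx, nhi, by simp, fun y hy n0 h0 => (step y hy n0 h0).trans ?_⟩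
    have h0p : 0 < n0 := hlo.trans_le h0.1
    rw [hM, div_le_div_iff₀ (by linarith) (by linarith [h0.2])]
    nlinarith [mul_nonneg (sub_nonneg.2 h0.2) (sub_nonneg.2 h)]
  · refine ⟨x, hx, nlo, by simp, fun y hy n0 h0 => (step y hy n0 h0).trans ?_⟩
    have h0p : 0 < n0 := hlo.trans_le h0.1
    rw [hM, div_le_div_iff₀ (by linarith) (by linarith)]
    nlinarith [mul_nonneg (sub_nonneg.2 h0.1) (sub_nonneg.2 h)]

/-- Extreme-point reduction for posterior expectations of linear functionals:
over a nonempty compact convex credal set `Y` of prior means and a prior-strength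
interval `[n̲, n̄]`, the supremum (resp. infimum) of
`E(y,n⁰) = ∑ k, c k · (n⁰ y_k + κ_k)/(n⁰+n)` is attained at an extreme point of
`Y` paired with an endpoint of `[n̲, n̄]`. -/
theorem posterior_envelope_attained_at_extreme_points (K : ℕ)
    (Y : Set (Fin K → ℝ)) (hYne : Y.Nonempty) (hYcomp : IsCompact Y)
    (hYconv : Convex ℝ Y)
    (hYsub : Y ⊆ {θ : Fin K → ℝ | (∀ k, 0 ≤ θ k) ∧ ∑ k, θ k = 1})
    (nlo nhi : ℝ) (hlo : 0 < nlo) (hlohi : nlo ≤ nhi)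
    (κ : Fin K → ℕ) (n : ℕ) (hκn : ∑ k, κ k = n) (hn : 0 < n)
    (c : Fin K → ℝ) :
    (∃ ystar ∈ Y.extremePoints ℝ, ∃ nstar ∈ ({nlo, nhi} : Set ℝ),
      ∀ y ∈ Y, ∀ n0 ∈ Set.Icc nlo nhi,
        ∑ k, c k * ((n0 * y k + κ k) / (n0 + n)) ≤
          ∑ k, c k * ((nstar * ystar k + κ k) / (nstar + n))) ∧
    (∃ ystar ∈ Y.extremePoints ℝ, ∃ nstar ∈ ({nlo, nhi} : Set ℝ),
      ∀ y ∈ Y, ∀ n0 ∈ Set.Icc nlo nhi,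
        ∑ k, c k * ((nstar * ystar k + κ k) / (nstar + n)) ≤
          ∑ k, c k * ((n0 * y k + κ k) / (n0 + n))) := by
  refine ⟨posterior_max Y hYne hYcomp nlo nhi hlo hlohi κ n c, ?_⟩
  obtain ⟨x, hx, t, ht, h⟩ := posterior_max Y hYne hYcomp nlo nhi hlo hlohi κ n (fun k => - c k)
  refine ⟨x, hx, t, ht, fun y hy n0 h0 => ?_⟩
  have := h y hy n0 h0
  simp only [neg_mul, Finset.sum_neg_distrib] at this
  exact neg_le_neg_iff.1 this
end

section
/- Let 0 < x < 1 and b > 0. For a > 0 define the regularized incomplete beta function I_x(a,b) = (∫_0^x t^(a−1)·(1−t)^(b−1) dt) / (∫_0^1 t^(a−1)·(1−t)^(b−1) dt), i.e. the cumulative distribution function at x of the Beta(a,b) distribution. Then: (i) for fixed b > 0, a ↦ I_x(a,b) is strictly decreasing on (0,∞): if 0 < a₁ < a₂ then I_x(a₂,b) < I_x(a₁,b); and (ii) for fixed a > 0, b ↦ I_x(a,b) is strictly increasing on (0,∞): if 0 < b₁ < b₂ then I_x(a,b₁) < I_x(a,b₂). Thus the Beta posterior CDF is monotone in each of its shape parameters,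 which is the monotonicity used to obtain the lower and upper marginal posterior envelopes at the extreme prior configurations in Theorem 1. -/
open MeasureTheory

/-- The regularized incomplete beta function `I_x(a,b)`: the CDF at `x` of the
Beta(a,b) distribution. -/
noncomputable def regIncBeta (a b x : ℝ) : ℝ :=
  (∫ t in Set.Ioo (0 : ℝ) x, t ^ (a - 1) * (1 - t) ^ (b - 1)) /
    (∫ t in Set.Ioo (0 : ℝ) 1, t ^ (a - 1) * (1 - t) ^ (b - 1))

lemma aux_setIntegral_pos {s : Set ℝ} (hs : MeasurableSet s) (hv : 0 < volume s) {h : ℝ → ℝ}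
    (hi : IntegrableOn h s) (hp : ∀ t ∈ s, 0 < h t) : 0 < ∫ t in s, h t := by
  rw [setIntegral_pos_iff_support_of_nonneg_ae _ hi]
  · refine lt_of_lt_of_le hv (measure_mono fun t ht => ⟨(hp t ht).ne', ht⟩)
  · filter_upwards [ae_restrict_mem hs] with t ht using (hp t ht).le

lemma aux_integrable {a b : ℝ} (ha : 0 < a) (hb : 0 < b) :
    IntegrableOn (fun t : ℝ => t ^ (a - 1) * (1 - t) ^ (b - 1)) (Set.Ioo 0 1) := by
  have h := (Complex.betaIntegral_convergent (u := (a : ℂ)) (v := (b : ℂ))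
    (by simpa using ha) (by simpa using hb))
  rw [intervalIntegrable_iff_integrableOn_Ioo_of_le zero_le_one] at h
  refine IntegrableOn.congr_fun h.norm (fun t ht => ?_) measurableSet_Ioo
  have h1 : (0 : ℝ) < 1 - t := by linarith [ht.2]
  have e1 : ‖(t : ℂ) ^ ((a : ℂ) - 1)‖ = t ^ (a - 1) := by
    rw [Complex.norm_cpow_eq_rpow_re_of_pos ht.1]; simp
  have e2 : ‖(1 - (t : ℂ)) ^ ((b : ℂ) - 1)‖ = (1 - t) ^ (b - 1) := by
    have : (1 - (t : ℂ)) = ((1 - t : ℝ) : ℂ) := by push_cast; rfl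
    rw [this, Complex.norm_cpow_eq_rpow_re_of_pos h1]; simp
  simp only [norm_mul, e1, e2]

lemma aux_ratio {x c : ℝ} (hx0 : 0 < x) (hx1 : x < 1) {f g : ℝ → ℝ}
    (hf : IntegrableOn f (Set.Ioo 0 1)) (hg : IntegrableOn g (Set.Ioo 0 1))
    (fp : ∀ t ∈ Set.Ioo (0 : ℝ) 1, 0 < f t) (gp : ∀ t ∈ Set.Ioo (0 : ℝ) 1, 0 < g t)
    (h1 : ∀ t ∈ Set.Ioo (0 : ℝ) x, g t < c * f t)
    (h2 : ∀ t ∈ Set.Ico x 1, c * f t ≤ g t) :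
    (∫ t in Set.Ioo 0 x, g t) / (∫ t in Set.Ioo 0 1, g t) <
      (∫ t in Set.Ioo 0 x, f t) / (∫ t in Set.Ioo 0 1, f t) := by
  have s1 : Set.Ioo 0 x ⊆ Set.Ioo (0 : ℝ) 1 := fun t ht => ⟨ht.1, ht.2.trans hx1⟩
  have s2 : Set.Ico x 1 ⊆ Set.Ioo (0 : ℝ) 1 := fun t ht => ⟨hx0.trans_le ht.1, ht.2⟩
  have hu : Set.Ioo (0 : ℝ) 1 = Set.Ioo 0 x ∪ Set.Ico x 1 :=
    (Set.Ioo_union_Ico_eq_Ioo hx0 hx1.le).symm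
  have hd : Disjoint (Set.Ioo (0 : ℝ) x) (Set.Ico x 1) := by
    rw [Set.disjoint_left]; intro t ht ht'; exact absurd ht.2 (not_lt.2 ht'.1)
  have v1 : 0 < volume (Set.Ioo (0 : ℝ) x) := by simpa using hx0
  have v2 : 0 < volume (Set.Ico x 1) := by simpa using hx1
  have F1 := aux_setIntegral_pos measurableSet_Ioo v1 (hf.mono_set s1) fun t ht => fp t (s1 ht)
  have G1 := aux_setIntegral_pos measurableSet_Ioo v1 (hg.mono_set s1) fun t ht => gp t (s1 ht)
  have F2 := aux_setIntegral_pos measurableSet_Ico v2 (hf.mono_set s2) fun t ht => fp t (s2 ht)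
  have G2 := aux_setIntegral_pos measurableSet_Ico v2 (hg.mono_set s2) fun t ht => gp t (s2 ht)
  have A := aux_setIntegral_pos (h := fun t => c * f t - g t) measurableSet_Ioo v1
    (((hf.mono_set s1).const_mul c).sub (hg.mono_set s1)) fun t ht => sub_pos.2 (h1 t ht)
  rw [integral_sub ((hf.mono_set s1).const_mul c) (hg.mono_set s1), integral_const_mul] at A
  have B := setIntegral_mono_on ((hf.mono_set s2).const_mul c) (hg.mono_set s2)
    measurableSet_Ico h2
  rw [integral_const_mul] at B
  rw [hu, setIntegral_union hd measurableSet_Ico (hf.mono_set s1) (hf.mono_set s2),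
    setIntegral_union hd measurableSet_Ico (hg.mono_set s1) (hg.mono_set s2),
    div_lt_div_iff₀ (by positivity) (by positivity)]
  nlinarith [mul_lt_mul_of_pos_right (sub_pos.1 A) F2, mul_le_mul_of_nonneg_left B F1.le]

lemma aux_pos (a b : ℝ) : ∀ t ∈ Set.Ioo (0 : ℝ) 1, 0 < t ^ (a - 1) * (1 - t) ^ (b - 1) :=
  fun _ ht => mul_pos (Real.rpow_pos_of_pos ht.1 _) (Real.rpow_pos_of_pos (sub_pos.2 ht.2) _)

/-- For `0 < x < 1`, the regularized incomplete beta function `I_x(a,b)` is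
strictly decreasing in the first shape parameter `a` (for fixed `b > 0`) and
strictly increasing in the second shape parameter `b` (for fixed `a > 0`). -/
theorem regIncBeta_monotone_in_shape_parameters (x : ℝ)
    (hx0 : 0 < x) (hx1 : x < 1) :
    (∀ b : ℝ, 0 < b → ∀ a₁ a₂ : ℝ, 0 < a₁ → a₁ < a₂ →
      regIncBeta a₂ b x < regIncBeta a₁ b x) ∧
    (∀ a : ℝ, 0 < a → ∀ b₁ b₂ : ℝ, 0 < b₁ → b₁ < b₂ →
      regIncBeta a b₁ x < regIncBeta a b₂ x) := by
  constructor
  · intro b hb a₁ a₂ ha h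
    have key : ∀ t : ℝ, 0 < t → t ^ (a₂ - 1) * (1 - t) ^ (b - 1) =
        t ^ (a₂ - a₁) * (t ^ (a₁ - 1) * (1 - t) ^ (b - 1)) := by
      intro t ht
      rw [← mul_assoc, ← Real.rpow_add ht]; congr 2; ring
    refine aux_ratio (c := x ^ (a₂ - a₁)) hx0 hx1 (aux_integrable ha hb)
      (aux_integrable (ha.trans h) hb) (aux_pos _ _) (aux_pos _ _) ?_ ?_
    · intro t ht
      rw [key t ht.1]
      exact mul_lt_mul_of_pos_right (Real.rpow_lt_rpow ht.1.le ht.2 (sub_pos.2 h))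
        (aux_pos _ _ t ⟨ht.1, ht.2.trans hx1⟩)
    · intro t ht
      rw [key t (hx0.trans_le ht.1)]
      exact mul_le_mul_of_nonneg_right (Real.rpow_le_rpow hx0.le ht.1 (sub_pos.2 h).le)
        (aux_pos _ _ t ⟨hx0.trans_le ht.1, ht.2⟩).le
  · intro a ha b₁ b₂ hb h
    have key : ∀ t : ℝ, t < 1 → t ^ (a - 1) * (1 - t) ^ (b₁ - 1) =
        (1 - t) ^ (b₁ - b₂) * (t ^ (a - 1) * (1 - t) ^ (b₂ - 1)) := by
      intro t ht
      rw [mul_left_comm, ← Real.rpow_add (sub_pos.2 ht)]; congr 2; ring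
    refine aux_ratio (c := (1 - x) ^ (b₁ - b₂)) hx0 hx1 (aux_integrable ha (hb.trans h))
      (aux_integrable ha hb) (aux_pos _ _) (aux_pos _ _) ?_ ?_
    · intro t ht
      rw [key t (ht.2.trans hx1)]
      exact mul_lt_mul_of_pos_right (Real.rpow_lt_rpow_of_neg (sub_pos.2 hx1)
        (by linarith [ht.2]) (sub_neg.2 h)) (aux_pos _ _ t ⟨ht.1, ht.2.trans hx1⟩)
    · intro t ht
      rw [key t ht.2]
      exact mul_le_mul_of_nonneg_right (Real.rpow_le_rpow_of_nonpos (sub_pos.2 ht.2)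
        (by linarith [ht.1]) (sub_neg.2 h).le) (aux_pos _ _ t ⟨hx0.trans_le ht.1, ht.2⟩).le
end
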